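/- arXiv:1612.02536 — 2 statements merged into one kernel-verified Lean document; each statement's English description precedes it below -/
import Mathlib

section
/- Let $d\le m$, let $A:[0,\infty)\to\mathbb{R}^{d\times d}$ and $B:[0,\infty)\to\mathbb{R}^{d\times m}$ be continuous with $\operatorname{rank} B(0)=d$, and let $Z:[0,\infty)\to\mathbb{R}^{d\times m}$ be differentiable with $Z(0)=0$ and $Z'(t)=A(t)Z(t)+B(t)$ for all $t\ge 0$. Then there exists $\delta_0>0$ such that $\operatorname{rank} Z(\delta)=d$ for every $\delta\in(0,\delta_0]$. -/
/-!
The rank of a matrix is at least `k` exactly when some `k × k` minor does not vanish, and minors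
are continuous, so a small perturbation cannot lower the rank. Since `Z 0 = 0`, the differential
equation at `t = 0` says that `t⁻¹ • Z t → B 0` as `t → 0⁺`, and scaling by `t⁻¹` does not change
the rank; hence `rank (B 0) ≤ rank (Z t)` for small `t > 0`.
-/

open Filter Topology

section Minors

variable {K m n : Type*} [Field K] [Fintype n]

theorem exists_linearIndependent_col_submatrix_of_le_rank {A : Matrix m n K} {k : ℕ}
    (hk : k ≤ A.rank) : ∃ c : Fin k → n, LinearIndependent K (A.submatrix id c).col := by
  rw [Matrix.rank_eq_finrank_span_cols] at hk
  have := Module.Finite.span_of_finite K (Set.finite_range A.col)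
  obtain ⟨v, hv_mem, -, hv⟩ := Submodule.exists_fun_fin_finrank_span_eq K (Set.range A.col)
  choose c hc using hv_mem
  refine ⟨c ∘ Fin.castLE hk, ?_⟩
  have hcol : (A.submatrix id (c ∘ Fin.castLE hk)).col = v ∘ Fin.castLE hk :=
    funext fun i => hc (Fin.castLE hk i)
  rw [hcol]
  exact hv.comp _ (Fin.castLE_injective hk)

theorem le_rank_iff_exists_det_submatrix_ne_zero [Finite m] {A : Matrix m n K} {k : ℕ} :
    k ≤ A.rank ↔ ∃ (r : Fin k → m) (c : Fin k → n), (A.submatrix r c).det ≠ 0 := by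
  constructor
  · intro hk
    have := Fintype.ofFinite m
    obtain ⟨c, hc⟩ := exists_linearIndependent_col_submatrix_of_le_rank hk
    have hrank : k ≤ (A.submatrix id c).transpose.rank := by
      rw [LinearIndependent.rank_matrix (M := (A.submatrix id c).transpose) hc, Fintype.card_fin]
    obtain ⟨r, hr⟩ := exists_linearIndependent_col_submatrix_of_le_rank hrank
    have hunit : IsUnit (A.submatrix r c) := Matrix.linearIndependent_rows_iff_isUnit.1 hr
    exact ⟨r, c, ((Matrix.isUnit_iff_isUnit_det _).1 hunit).ne_zero⟩
  · rintro ⟨r, c, hdet⟩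
    calc k = (A.submatrix r c).rank := by rw [Matrix.rank_of_det_ne_zero hdet, Fintype.card_fin]
      _ ≤ A.rank := A.rank_submatrix_le r c

theorem eventually_matrix_rank_le_rank [Finite m] [TopologicalSpace K] [IsTopologicalRing K]
    [T1Space K] (A : Matrix m n K) : ∀ᶠ M in 𝓝 A, A.rank ≤ M.rank := by
  obtain ⟨r, c, hdet⟩ := le_rank_iff_exists_det_submatrix_ne_zero.1 (le_refl A.rank)
  have hcont : Continuous fun M : Matrix m n K => (M.submatrix r c).det := by fun_prop
  filter_upwards [hcont.continuousAt.eventually_ne hdet] with M hM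
  exact le_rank_iff_exists_det_submatrix_ne_zero.2 ⟨r, c, hM⟩

end Minors

theorem eventually_rank_deriv_le_rank_sub {𝕜 m n : Type*} [NontriviallyNormedField 𝕜] [Finite m]
    [Fintype n] {Z : 𝕜 → Matrix m n 𝕜} {Z' : Matrix m n 𝕜} {s : Set 𝕜} {x : 𝕜}
    (hZ : ∀ i j, HasDerivWithinAt (fun t => Z t i j) (Z' i j) s x) :
    ∀ᶠ t in 𝓝[s \ {x}] x, Z'.rank ≤ (Z t - Z x).rank := by
  have hslope : Tendsto (slope Z x) (𝓝[s \ {x}] x) (𝓝 Z') :=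
    tendsto_pi_nhds.2 fun i => tendsto_pi_nhds.2 fun j =>
      hasDerivWithinAt_iff_tendsto_slope.1 (hZ i j)
  filter_upwards [hslope.eventually (eventually_matrix_rank_le_rank Z'), self_mem_nhdsWithin]
    with t ht hts
  have hscale : (t - x)⁻¹ ≠ 0 := inv_ne_zero (sub_ne_zero.2 hts.2)
  calc Z'.rank ≤ ((t - x)⁻¹ • (Z t - Z x)).rank := ht
    _ = (Z t - Z x).rank :=
      Matrix.rank_smul_of_mem_nonZeroDivisors _ (mem_nonZeroDivisors_of_ne_zero hscale)

theorem stmt_3_general {m n : Type*} [Finite m] [Fintype n] {Z : ℝ → Matrix m n ℝ}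
    {Z' : Matrix m n ℝ} (hZ : ∀ i j, HasDerivWithinAt (fun t => Z t i j) (Z' i j) (Set.Ici 0) 0) :
    ∃ δ0 > (0 : ℝ), ∀ δ ∈ Set.Ioc (0 : ℝ) δ0, Z'.rank ≤ (Z δ - Z 0).rank := by
  have hev : ∀ᶠ t in 𝓝[>] (0 : ℝ), Z'.rank ≤ (Z t - Z 0).rank := by
    simpa only [Set.Ici_sdiff_left] using eventually_rank_deriv_le_rank_sub hZ
  exact mem_nhdsGT_iff_exists_Ioc_subset.1 hev

/-- if `Z(0) = 0`, `Z' = AZ + B` on `[0,∞)` with `A, B` continuous and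
`rank B(0) = d ≤ m`, then `rank Z(δ) = d` for all sufficiently small `δ > 0`. -/
theorem stmt_3 (d m : ℕ) (hdm : d ≤ m)
    (A : ℝ → Matrix (Fin d) (Fin d) ℝ)
    (B : ℝ → Matrix (Fin d) (Fin m) ℝ)
    (hA : ContinuousOn A (Set.Ici 0))
    (hB : ContinuousOn B (Set.Ici 0))
    (hrankB : (B 0).rank = d)
    (Z : ℝ → Matrix (Fin d) (Fin m) ℝ)
    (hZ0 : Z 0 = 0)
    (hZ : ∀ t ≥ (0:ℝ), ∀ (i : Fin d) (j : Fin m),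
      HasDerivWithinAt (fun s => Z s i j) ((A t * Z t + B t) i j) (Set.Ici 0) t) :
    ∃ δ0 > (0:ℝ), ∀ δ ∈ Set.Ioc (0:ℝ) δ0, (Z δ).rank = d := by
  obtain ⟨δ0, hpos, hδ⟩ := stmt_3_general (hZ 0 le_rfl)
  simp only [hZ0, Matrix.mul_zero, zero_add, sub_zero, hrankB] at hδ
  exact ⟨δ0, hpos, fun δ h => le_antisymm (Z δ).rank_le_height (hδ δ h)⟩
end

section
/- Fix $T>0$, $\lambda>0$, $\sigma>0$. For each $N\in\mathbb{N}$, set $\delta_N=T/N$ and let $y^{(N)}_0,\dots,y^{(N)}_N$ be real numbers; define $S_N=\sum_{k=0}^{N-1}(y^{(N)}_{k+1}-y^{(N)}_k)^2$, $Q_N=\delta_N\sum_{k=0}^{N-1}(y^{(N)}_k)^2$, $R_N=\sum_{k=0}^{N-1}y^{(N)}_k(y^{(N)}_{k+1}-y^{(N)}_k)$, and the log-likelihood $\ell_N=-\frac N2\log(2\pi\sigma^2)-\frac{T}{\delta_N}\log\Big(\frac{1-e^{-\lambda\delta_N}}{\lambda\delta_N}\Big)-\frac{\lambda^2\delta_N}{2\sigma^2(1-e^{-\lambda\delta_N})^2}\sum_{k=0}^{N-1}\big(y^{(N)}_{k+1}-y^{(N)}_k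 e^{-\lambda\delta_N}\big)^2$. If $S_N\to S$, $Q_N\to Q$ and $R_N\to R$ as $N\to\infty$, then $\ell_N+\frac N2\log(2\pi\sigma^2)+\frac{N}{2\sigma^2 T}S_N\;\longrightarrow\;\frac{\lambda T}{2}-\frac{\lambda S}{2\sigma^2}-\frac{\lambda^2 Q}{2\sigma^2}-\frac{\lambda R}{\sigma^2}.$ -/
/-!
The divided difference `φ z = (exp z - 1) / z`, extended by `φ 0 = 1`, is differentiable at `0` with
`φ' 0 = 1 / 2`. At `z = -λ δ_N` one has `1 - exp (-λ δ_N) = λ δ_N φ z`, and expanding the square of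
the residual `(y_{k+1} - y_k) + (1 - exp (-λ δ_N)) y_k` turns the log-likelihood into an exact
combination of `S_N`, `R_N`, `Q_N` whose weights are powers of `φ z`. Only the logarithm and the
weight of `S_N` are multiplied by `δ_N⁻¹`, so the limit needs `φ` to first order there, through
`log (φ z) / z → 1 / 2` and `(φ z ^ (-2) - 1) / z → -1`, and to zeroth order elsewhere.
-/

open Filter Finset Real Topology

theorem tendsto_const_div_atTop_nhdsNE_zero_nat {c : ℝ} (hc : c ≠ 0) :
    Tendsto (fun n : ℕ => c / n) atTop (𝓝[≠] 0) := by
  refine tendsto_nhdsWithin_iff.2 ⟨tendsto_const_div_atTop_nhds_zero_nat c, ?_⟩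
  filter_upwards [eventually_ne_atTop 0] with n hn
  exact div_ne_zero hc (Nat.cast_ne_zero.2 hn)

theorem hasDerivAt_dslope_self_of_analyticAt {𝕜 : Type*} [NontriviallyNormedField 𝕜]
    [CompleteSpace 𝕜] [CharZero 𝕜] {f : 𝕜 → 𝕜} {a : 𝕜} (hf : AnalyticAt 𝕜 f a) :
    HasDerivAt (dslope f a) (iteratedDeriv 2 f a / 2) a := by
  simpa using hf.hasFPowerSeriesAt.has_fpower_series_dslope_fslope.hasDerivAt

theorem mul_dslope_exp_zero (x : ℝ) : x * dslope exp 0 x = exp x - 1 := by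
  simpa using sub_smul_dslope exp 0 x

theorem dslope_exp_zero_pos (x : ℝ) : 0 < dslope exp 0 x := by
  rcases eq_or_ne x 0 with rfl | hx
  · simp
  · rw [dslope_of_ne _ hx]
    exact (exp_strictMono.strictMonoOn Set.univ).slope_pos trivial trivial hx.symm

theorem hasDerivAt_dslope_exp_zero : HasDerivAt (dslope exp 0) (1 / 2) 0 := by
  simpa [iteratedDeriv_eq_iterate] using
    hasDerivAt_dslope_self_of_analyticAt (analyticAt_rexp (x := 0))

theorem tendsto_inv_dslope_exp_zero :
    Tendsto (fun x => (dslope exp 0 x)⁻¹) (𝓝[≠] 0) (𝓝 1) := by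
  simpa using (hasDerivAt_dslope_exp_zero.fun_inv (by simp)).continuousAt.continuousWithinAt.tendsto

theorem tendsto_log_dslope_exp_zero_div :
    Tendsto (fun x => log (dslope exp 0 x) / x) (𝓝[≠] 0) (𝓝 (1 / 2)) := by
  simpa [div_eq_inv_mul] using (hasDerivAt_dslope_exp_zero.log (by simp)).tendsto_slope_zero

theorem tendsto_inv_sq_dslope_exp_zero_sub_one_div :
    Tendsto (fun x => ((dslope exp 0 x ^ 2)⁻¹ - 1) / x) (𝓝[≠] 0) (𝓝 (-1)) := by
  simpa [div_eq_inv_mul] using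
    ((hasDerivAt_dslope_exp_zero.fun_pow 2).fun_inv (by simp)).tendsto_slope_zero

theorem sum_sq_sub_mul_eq {A : Type*} [CommRing A] (y : ℕ → A) (r : A) (N : ℕ) :
    ∑ k ∈ range N, (y (k + 1) - y k * r) ^ 2
      = ∑ k ∈ range N, (y (k + 1) - y k) ^ 2
        + 2 * (1 - r) * ∑ k ∈ range N, y k * (y (k + 1) - y k)
        + (1 - r) ^ 2 * ∑ k ∈ range N, y k ^ 2 := by
  simp only [mul_sum, ← sum_add_distrib]
  exact sum_congr rfl fun k _ => by ring

section OrnsteinUhlenbeck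

variable {lam δ : ℝ}

theorem one_sub_exp_neg_mul_eq : 1 - exp (-lam * δ) = lam * δ * dslope exp 0 (-lam * δ) := by
  linarith [mul_dslope_exp_zero (-lam * δ)]

theorem one_sub_exp_neg_mul_div_eq_dslope (hlam : lam ≠ 0) (hδ : δ ≠ 0) :
    (1 - exp (-lam * δ)) / (lam * δ) = dslope exp 0 (-lam * δ) := by
  rw [one_sub_exp_neg_mul_eq, mul_div_cancel_left₀ _ (mul_ne_zero hlam hδ)]

theorem weighted_sum_sq_residual_eq (hlam : lam ≠ 0) (hδ : δ ≠ 0) (sig : ℝ) (y : ℕ → ℝ) (N : ℕ) :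
    lam ^ 2 * δ / (2 * sig ^ 2 * (1 - exp (-lam * δ)) ^ 2)
        * ∑ k ∈ range N, (y (k + 1) - y k * exp (-lam * δ)) ^ 2
      = (∑ k ∈ range N, (y (k + 1) - y k) ^ 2) / (2 * sig ^ 2 * δ)
        - lam / (2 * sig ^ 2) * (((dslope exp 0 (-lam * δ) ^ 2)⁻¹ - 1) / (-lam * δ)
          * ∑ k ∈ range N, (y (k + 1) - y k) ^ 2)
        + lam ^ 2 / (2 * sig ^ 2) * (δ * ∑ k ∈ range N, y k ^ 2)
        + lam / sig ^ 2
          * ((dslope exp 0 (-lam * δ))⁻¹ * ∑ k ∈ range N, y k * (y (k + 1) - y k)) := by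
  have hφ := (dslope_exp_zero_pos (-lam * δ)).ne'
  rw [sum_sq_sub_mul_eq, one_sub_exp_neg_mul_eq]
  generalize dslope exp 0 (-lam * δ) = φ at hφ ⊢
  field_simp
  ring

end OrnsteinUhlenbeck

theorem stmt_16_general (T lam sig : ℝ) (hT : T ≠ 0) (hlam : lam ≠ 0) (hsig : sig ≠ 0)
    (y : ℕ → ℕ → ℝ) (δ : ℕ → ℝ) (hδ : ∀ N : ℕ, δ N = T / N)
    (SN QN RN : ℕ → ℝ)
    (hSN : ∀ N : ℕ, SN N = ∑ k ∈ range N, (y N (k + 1) - y N k) ^ 2)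
    (hQN : ∀ N : ℕ, QN N = δ N * ∑ k ∈ range N, (y N k) ^ 2)
    (hRN : ∀ N : ℕ, RN N = ∑ k ∈ range N, y N k * (y N (k + 1) - y N k))
    (ℓ : ℕ → ℝ)
    (hℓ : ∀ N : ℕ, ℓ N
      = -((N : ℝ) / 2) * log (2 * π * sig ^ 2)
        - T / δ N * log ((1 - exp (-lam * δ N)) / (lam * δ N))
        - lam ^ 2 * δ N / (2 * sig ^ 2 * (1 - exp (-lam * δ N)) ^ 2)
            * ∑ k ∈ range N, (y N (k + 1) - y N k * exp (-lam * δ N)) ^ 2)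
    (S Q R : ℝ)
    (hS : Tendsto SN atTop (𝓝 S))
    (hQ : Tendsto QN atTop (𝓝 Q))
    (hR : Tendsto RN atTop (𝓝 R)) :
    Tendsto
      (fun N : ℕ => ℓ N + (N : ℝ) / 2 * log (2 * π * sig ^ 2)
        + (N : ℝ) / (2 * sig ^ 2 * T) * SN N)
      atTop
      (𝓝 (lam * T / 2 - lam * S / (2 * sig ^ 2)
        - lam ^ 2 * Q / (2 * sig ^ 2) - lam * R / sig ^ 2)) := by
  have hz : Tendsto (fun N => -lam * δ N) atTop (𝓝[≠] 0) := by
    simpa only [hδ, mul_div_assoc] using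
      tendsto_const_div_atTop_nhdsNE_zero_nat (mul_ne_zero (neg_ne_zero.2 hlam) hT)
  have hlogTerm := (tendsto_log_dslope_exp_zero_div.comp hz).const_mul (lam * T)
  have hSTerm := ((tendsto_inv_sq_dslope_exp_zero_sub_one_div.comp hz).mul hS).const_mul
    (lam / (2 * sig ^ 2))
  have hQTerm := hQ.const_mul (lam ^ 2 / (2 * sig ^ 2))
  have hRTerm := ((tendsto_inv_dslope_exp_zero.comp hz).mul hR).const_mul (lam / sig ^ 2)
  refine ((((hlogTerm.add hSTerm).sub hQTerm).sub hRTerm).congr' ?_).trans_eq (by ring_nf)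
  filter_upwards [eventually_ne_atTop 0] with N hN
  have hδN : δ N ≠ 0 := by rw [hδ]; exact div_ne_zero hT (Nat.cast_ne_zero.2 hN)
  have hNT : (N : ℝ) = T / δ N := by rw [hδ, div_div_cancel₀ hT]
  have hquad := weighted_sum_sq_residual_eq hlam hδN sig (y N) N
  rw [← hSN, ← hRN, ← hQN] at hquad
  rw [hℓ, one_sub_exp_neg_mul_div_eq_dslope hlam hδN, hquad, hNT]
  simp only [Function.comp_apply]
  field_simp
  ring

/-- two-scale expansion of the OU log-likelihood. If the discrete
quadratic variation `S_N`, discrete `L²` norm `Q_N` and discrete stochastic-integral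
sum `R_N` converge, then
`ℓ_N + (N/2) log(2πσ²) + (N/(2σ²T)) S_N → λT/2 - λS/(2σ²) - λ²Q/(2σ²) - λR/σ²`. -/
theorem stmt_16 (T lam sig : ℝ) (hT : 0 < T) (hlam : 0 < lam) (hsig : 0 < sig)
    (y : ℕ → ℕ → ℝ)
    (δ : ℕ → ℝ) (hδ : ∀ N : ℕ, δ N = T / N)
    (SN QN RN : ℕ → ℝ)
    (hSN : ∀ N : ℕ, SN N = ∑ k ∈ Finset.range N, (y N (k+1) - y N k) ^ 2)
    (hQN : ∀ N : ℕ, QN N = δ N * ∑ k ∈ Finset.range N, (y N k) ^ 2)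
    (hRN : ∀ N : ℕ, RN N = ∑ k ∈ Finset.range N, y N k * (y N (k+1) - y N k))
    (ℓ : ℕ → ℝ)
    (hℓ : ∀ N : ℕ, ℓ N
      = -((N : ℝ) / 2) * Real.log (2 * Real.pi * sig ^ 2)
        - T / δ N * Real.log ((1 - Real.exp (-lam * δ N)) / (lam * δ N))
        - lam ^ 2 * δ N / (2 * sig ^ 2 * (1 - Real.exp (-lam * δ N)) ^ 2)
            * ∑ k ∈ Finset.range N, (y N (k+1) - y N k * Real.exp (-lam * δ N)) ^ 2)
    (S Q R : ℝ)
    (hS : Filter.Tendsto SN Filter.atTop (nhds S))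
    (hQ : Filter.Tendsto QN Filter.atTop (nhds Q))
    (hR : Filter.Tendsto RN Filter.atTop (nhds R)) :
    Filter.Tendsto
      (fun N : ℕ => ℓ N + (N : ℝ) / 2 * Real.log (2 * Real.pi * sig ^ 2)
        + (N : ℝ) / (2 * sig ^ 2 * T) * SN N)
      Filter.atTop
      (nhds (lam * T / 2 - lam * S / (2 * sig ^ 2)
        - lam ^ 2 * Q / (2 * sig ^ 2) - lam * R / sig ^ 2)) :=
  stmt_16_general T lam sig hT.ne' hlam.ne' hsig.ne' y δ hδ SN QN RN hSN hQN hRN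
    ℓ hℓ S Q R hS hQ hR
end
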